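/- Let q ≥ 3, a_0 ∈ ℤ, and let (a_i)_{i≥1} be an infinite q-regular sequence with convergents p_n, q_n. Then: q_n ≠ 0 for all n ≥ 0; |q_n| ≥ |q_{n−1}| for all n ≥ 1, and for q = 3 even |q_n| > |q_{n−1}| for all n ≥ 1; |q_n| → ∞ as n → ∞; and the sequence (p_n/q_n) is a Cauchy sequence. -/

import Mathlib

open Filter Topology

/-- `λ_q = 2 cos (π/q)`. -/
noncomputable def lamq (q : ℕ) : ℝ := 2 * Real.cos (Real.pi / q)

/-- `h_q = (q-2)/2` for even `q` and `(q-3)/2` for odd `q`. -/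
def hQ (q : ℕ) : ℕ := if Even q then (q - 2) / 2 else (q - 3) / 2

/-- Forbidden blocks for the nearest `λ_q`-multiple continued fractions.
For `ε ∈ {1,-1}`: the block `(ε)^{h_q+1}`; for even `q` the blocks `((ε)^{h_q}, ε·m)`, `m ≥ 1`;
for odd `q` (including `q = 3`, where `h_q = 0`) the blocks `((ε)^{h_q}, ε·2, (ε)^{h_q}, ε·m)`,
`m ≥ 1`. -/
def IsForbidden (q : ℕ) (L : List ℤ) : Prop :=
  ∃ ε : ℤ, (ε = 1 ∨ ε = -1) ∧
    (L = List.replicate (hQ q + 1) ε ∨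
      (if Even q then
        ∃ m : ℤ, 1 ≤ m ∧ L = List.replicate (hQ q) ε ++ [ε * m]
      else
        ∃ m : ℤ, 1 ≤ m ∧
          L = List.replicate (hQ q) ε ++ ε * 2 :: (List.replicate (hQ q) ε ++ [ε * m])))

/-- An infinite sequence is `q`-regular if no finite subblock is forbidden. -/
def RegularSeq (q : ℕ) (a : ℕ → ℤ) : Prop :=
  ∀ (l len : ℕ), ¬ IsForbidden q (List.ofFn fun j : Fin len => a (l + (j : ℕ)))

/-- An infinite sequence is dual `q`-regular if no reversed finite subblock is forbidden. -/
def DualRegularSeq (q : ℕ) (a : ℕ → ℤ) : Prop :=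
  ∀ (l len : ℕ), ¬ IsForbidden q (List.ofFn fun j : Fin len => a (l + (j : ℕ))).reverse

/-- A finite sequence is `q`-regular if no contiguous subblock is forbidden. -/
def RegularList (q : ℕ) (L : List ℤ) : Prop :=
  ∀ B : List ℤ, B <:+: L → ¬ IsForbidden q B

/-- Numerators of the convergents: `p₀ = a₀λ`, `p₁ = a₁λ·p₀ - 1`,
`pₙ = aₙλ·pₙ₋₁ - pₙ₋₂` (so that `p₋₁ = 1`, `p₋₂ = 0`).  Here `A n` is the digit `aₙ`. -/
noncomputable def cfP (lam : ℝ) (A : ℕ → ℤ) : ℕ → ℝ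
  | 0 => (A 0 : ℝ) * lam
  | 1 => (A 1 : ℝ) * lam * ((A 0 : ℝ) * lam) - 1
  | (n + 2) => (A (n + 2) : ℝ) * lam * cfP lam A (n + 1) - cfP lam A n

/-- Denominators of the convergents: `q₀ = 1`, `q₁ = a₁λ`,
`qₙ = aₙλ·qₙ₋₁ - qₙ₋₂` (so that `q₋₁ = 0`, `q₋₂ = -1`). -/
noncomputable def cfQ (lam : ℝ) (A : ℕ → ℤ) : ℕ → ℝ
  | 0 => 1
  | 1 => (A 1 : ℝ) * lam
  | (n + 2) => (A (n + 2) : ℝ) * lam * cfQ lam A (n + 1) - cfQ lam A n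

/-- The λ-continued fraction with digit sequence `A` converges to `x`. -/
def CFConvergesTo (lam : ℝ) (A : ℕ → ℤ) (x : ℝ) : Prop :=
  (∀ n, cfQ lam A n ≠ 0) ∧
    Filter.Tendsto (fun n => cfP lam A n / cfQ lam A n) Filter.atTop (nhds x)

/-- The value `p_L/q_L` of the finite continued fraction `[a₀; a₁, …, a_L]`. -/
noncomputable def cfValList (lam : ℝ) (a0 : ℤ) (L : List ℤ) : ℝ :=
  cfP lam (fun i => (a0 :: L).getD i 0) L.length /
    cfQ lam (fun i => (a0 :: L).getD i 0) L.length

/-- The last denominator `q_L` of the finite continued fraction `[a₀; a₁, …, a_L]`. -/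
noncomputable def cfDenList (lam : ℝ) (a0 : ℤ) (L : List ℤ) : ℝ :=
  cfQ lam (fun i => (a0 :: L).getD i 0) L.length

/-- The modified floor: `⌊t⌋* = ⌈t⌉ - 1` for `t > 0` and `⌊t⌋* = ⌊t⌋` for `t ≤ 0`. -/
noncomputable def floorstar (t : ℝ) : ℤ := if 0 < t then ⌈t⌉ - 1 else ⌊t⌋

/-- The nearest `λ`-multiple: `⟨y⟩ = ⌊y/λ + 1/2⌋*`. -/
noncomputable def nearestLam (lam : ℝ) (x : ℝ) : ℤ := floorstar (x / lam + 1 / 2)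

/-- The interval map `f_q` on `I_q = [-λ/2, λ/2]`. -/
noncomputable def fq (lam : ℝ) (x : ℝ) : ℝ :=
  if x = 0 then 0 else -1 / x - (nearestLam lam (-1 / x) : ℝ) * lam

/-- `R_q`: equal to `1` for even `q`, and the positive root of `R² + (2-λ_q)R = 1` for odd `q`. -/
noncomputable def Rq (q : ℕ) : ℝ :=
  if Even q then 1 else (lamq q - 2 + Real.sqrt ((2 - lamq q) ^ 2 + 4)) / 2

/-- `r_q = R_q - λ_q`. -/
noncomputable def rq (q : ℕ) : ℝ := Rq q - lamq q

/-- The map `⟨·⟩*` used by the dual algorithm. -/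
noncomputable def nearestDual (lam R y : ℝ) : ℤ :=
  if 0 ≤ y then floorstar (y / lam + 1 - R / lam) else floorstar (y / lam + R / lam)

/-- The dual interval map `f_q^*` on `I_{R_q} = [-R_q, R_q]`. -/
noncomputable def fqstar (lam R : ℝ) (x : ℝ) : ℝ :=
  if x = 0 then 0 else -1 / x - (nearestDual lam R (-1 / x) : ℝ) * lam

/-- The matrix `S = [[0,-1],[1,0]]` as an element of `SL(2,ℝ)`. -/
noncomputable def matS : Matrix.SpecialLinearGroup (Fin 2) ℝ :=
  ⟨!![0, -1; 1, 0], by norm_num [Matrix.det_fin_two_of]⟩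

/-- The matrix `T = [[1,λ],[0,1]]` as an element of `SL(2,ℝ)`. -/
noncomputable def matT (lam : ℝ) : Matrix.SpecialLinearGroup (Fin 2) ℝ :=
  ⟨!![1, lam; 0, 1], by norm_num [Matrix.det_fin_two_of]⟩

/-- The Hecke triangle group `G_q`, the subgroup of `SL(2,ℝ)` generated by `S` and `T_q`. -/
noncomputable def Hecke (q : ℕ) : Subgroup (Matrix.SpecialLinearGroup (Fin 2) ℝ) :=
  Subgroup.closure {matS, matT (lamq q)}

/-- The Möbius action of `g` on `x ∈ ℝ`. -/
noncomputable def moeb (g : Matrix.SpecialLinearGroup (Fin 2) ℝ) (x : ℝ) : ℝ :=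
  (g.val 0 0 * x + g.val 0 1) / (g.val 1 0 * x + g.val 1 1)

/-- `x` and `y` are `G_q`-equivalent. -/
def GqEquiv (q : ℕ) (x y : ℝ) : Prop :=
  ∃ g ∈ Hecke q, (g.val 1 0 * x + g.val 1 1 ≠ 0) ∧ moeb g x = y

/-- Two sequences have a common tail. -/
def CommonTail (a b : ℕ → ℤ) : Prop := ∃ m n : ℕ, ∀ k : ℕ, a (m + k) = b (n + k)

/-- The period block of `ρ_q`: `(3)` for `q = 3`, `((1)^{h_q-1}, 2)` for even `q`
and `((1)^{h_q}, 2, (1)^{h_q-1}, 2)` for odd `q ≥ 5`. -/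
def rhoBlock (q : ℕ) : List ℤ :=
  if q = 3 then [3]
  else if Even q then List.replicate (hQ q - 1) 1 ++ [2]
  else List.replicate (hQ q) 1 ++ 2 :: (List.replicate (hQ q - 1) 1 ++ [2])

/-- The periodic sequence `ρ_q`. -/
def rho (q : ℕ) (i : ℕ) : ℤ := (rhoBlock q).getD (i % (rhoBlock q).length) 0

/-- `x` has the infinite regular `λ_q`-CF with digit sequence `A` (with `A 0 = a₀`). -/
def HasRegCF (q : ℕ) (x : ℝ) (A : ℕ → ℤ) : Prop :=
  (∀ i, A (i + 1) ≠ 0) ∧ RegularSeq q (fun i => A (i + 1)) ∧ CFConvergesTo (lamq q) A x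

/-- `x` has the infinite dual regular `λ_q`-CF with digit sequence `A` (with `A 0 = a₀`). -/
def HasDualRegCF (q : ℕ) (x : ℝ) (A : ℕ → ℤ) : Prop :=
  (∀ i, A (i + 1) ≠ 0) ∧ DualRegularSeq q (fun i => A (i + 1)) ∧ CFConvergesTo (lamq q) A x

/-- The digits of `x` produced by the algorithm for `f_q`: `a_{i+1} = ⟨-1 / f_q^i(x)⟩`. -/
noncomputable def digitSeq (lam : ℝ) (x : ℝ) : ℕ → ℤ :=
  fun i => nearestLam lam (-1 / (fq lam)^[i] x)

/-- The digits of `x` produced by the algorithm for `f_q^*`: `b_{i+1} = ⟨-1 / (f_q^*)^i(x)⟩*`. -/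
noncomputable def digitSeqStar (lam R : ℝ) (x : ℝ) : ℕ → ℤ :=
  fun i => nearestDual lam R (-1 / (fqstar lam R)^[i] x)


/-! ### Ratios of consecutive denominators -/

/-- The sequence `t_n = q_{n-1}/q_n`. -/
noncomputable def ratT (lam : ℝ) (A : ℕ → ℤ) : ℕ → ℝ
  | 0 => 0
  | (n + 1) => 1 / ((A (n + 1) : ℝ) * lam - ratT lam A n)

theorem abs_digit_mul {lam : ℝ} {a : ℤ} (hlam : 0 < lam) (ha : a ≠ 0) :
    lam ≤ |(a : ℝ) * lam| := by
  rw [abs_mul, abs_of_pos hlam]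
  have : (1 : ℝ) ≤ |(a : ℝ)| := by exact_mod_cast Int.one_le_abs ha
  nlinarith

theorem den_ne {lam t : ℝ} {a : ℤ} (hlam : 0 < lam) (ha : a ≠ 0) (ht : |t| < lam) :
    (a : ℝ) * lam - t ≠ 0 := by
  intro h
  have h1 := abs_digit_mul hlam ha
  have : (a : ℝ) * lam = t := by linarith
  rw [this] at h1
  linarith

theorem cfQ_succ_ratT (lam : ℝ) (A : ℕ → ℤ) (hlam : 0 < lam) (hnz : ∀ i, A (i + 1) ≠ 0)
    (hT : ∀ n, |ratT lam A n| < lam) (n : ℕ) :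
    cfQ lam A n = ratT lam A (n + 1) * cfQ lam A (n + 1) := by
  induction n with
  | zero =>
    have h0 := den_ne hlam (hnz 0) (hT 0)
    simp only [ratT, cfQ, zero_add, sub_zero] at h0 ⊢
    rw [one_div, inv_mul_cancel₀ h0]
  | succ n ih =>
    have h0 := den_ne hlam (hnz (n + 1)) (hT (n + 1))
    rw [ratT]
    simp only [cfQ]
    rw [ih]
    field_simp

theorem cf_det (lam : ℝ) (A : ℕ → ℤ) (n : ℕ) :
    cfP lam A (n + 1) * cfQ lam A n - cfP lam A n * cfQ lam A (n + 1) = -1 := by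
  induction n with
  | zero => simp only [cfP, cfQ]; ring
  | succ n ih =>
    rw [cfP, cfQ]
    linarith

theorem final_core (lam c : ℝ) (A : ℕ → ℤ) (hlam : 0 < lam) (hc0 : 0 < c) (hc1 : c < 1)
    (hnz : ∀ i, A (i + 1) ≠ 0)
    (hT : ∀ n, |ratT lam A n| < lam) (hT1 : ∀ n, |ratT lam A n| ≤ 1)
    (hTc : ∀ n, |ratT lam A n| ≤ c ∨ |ratT lam A (n + 1)| ≤ c) :
    (∀ n, cfQ lam A n ≠ 0) ∧
    (∀ n : ℕ, 1 ≤ n → |cfQ lam A (n - 1)| ≤ |cfQ lam A n|) ∧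
    ((∀ n, |ratT lam A n| < 1) → ∀ n : ℕ, 1 ≤ n → |cfQ lam A (n - 1)| < |cfQ lam A n|) ∧
    Filter.Tendsto (fun n => |cfQ lam A n|) Filter.atTop Filter.atTop ∧
    CauchySeq (fun n => cfP lam A n / cfQ lam A n) := by
  have hrec := cfQ_succ_ratT lam A hlam hnz hT
  have hne : ∀ n, cfQ lam A n ≠ 0 := by
    intro n
    induction n with
    | zero => simp [cfQ]
    | succ n ih =>
      intro h
      apply ih
      rw [hrec n, h, mul_zero]
  have habs : ∀ n, |cfQ lam A n| = |ratT lam A (n + 1)| * |cfQ lam A (n + 1)| := by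
    intro n
    rw [← abs_mul, ← hrec n]
  have hpos : ∀ n, 0 < |cfQ lam A n| := fun n => abs_pos.mpr (hne n)
  have hmono : ∀ n, |cfQ lam A n| ≤ |cfQ lam A (n + 1)| := by
    intro n
    rw [habs n]
    have := hT1 (n + 1)
    have := hpos (n + 1)
    nlinarith
  have hone : ∀ n, 1 ≤ |cfQ lam A n| := by
    intro n
    induction n with
    | zero => simp [cfQ]
    | succ n ih => exact ih.trans (hmono n)
  have htwo : ∀ n, |cfQ lam A n| ≤ c * |cfQ lam A (n + 2)| := by
    intro n
    have e1 := habs n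
    have e2 := habs (n + 1)
    have p2 := hpos (n + 2)
    have m2 := hmono (n + 1)
    have m1 := hmono n
    rcases hTc (n + 1) with h | h
    · calc |cfQ lam A n| = |ratT lam A (n + 1)| * |cfQ lam A (n + 1)| := e1
        _ ≤ c * |cfQ lam A (n + 2)| := by gcongr
    · calc |cfQ lam A n| ≤ |cfQ lam A (n + 1)| := m1
        _ = |ratT lam A (n + 2)| * |cfQ lam A (n + 2)| := e2
        _ ≤ c * |cfQ lam A (n + 2)| := by gcongr
  set r := Real.sqrt c with hr
  have hr0 : 0 < r := Real.sqrt_pos.mpr hc0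
  have hrr : r * r = c := Real.mul_self_sqrt hc0.le
  have hr1 : r < 1 := by nlinarith
  have hgrow : ∀ n, r ≤ |cfQ lam A n| * r ^ n ∧ r ≤ |cfQ lam A (n + 1)| * r ^ (n + 1) := by
    intro n
    induction n with
    | zero =>
      constructor
      · have := hone 0
        simp; linarith
      · have := hone 1
        simp only [zero_add, pow_one]
        nlinarith
    | succ n ih =>
      refine ⟨ih.2, ?_⟩
      have h2 := htwo n
      have hp : 0 < r ^ n := pow_pos hr0 n
      calc r ≤ |cfQ lam A n| * r ^ n := ih.1
        _ ≤ c * |cfQ lam A (n + 2)| * r ^ n := by gcongr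
        _ = |cfQ lam A (n + 1 + 1)| * r ^ (n + 1 + 1) := by rw [← hrr]; ring
  have hinv : ∀ n, 1 / |cfQ lam A n| ≤ (1 / r) * r ^ n := by
    intro n
    have := (hgrow n).1
    rw [div_mul_eq_mul_div, div_le_div_iff₀ (hpos n) hr0]
    linarith
  refine ⟨hne, ?_, ?_, ?_, ?_⟩
  · intro n hn
    obtain ⟨m, rfl⟩ : ∃ m, n = m + 1 := ⟨n - 1, by omega⟩
    exact hmono m
  · intro hs n hn
    obtain ⟨m, rfl⟩ : ∃ m, n = m + 1 := ⟨n - 1, by omega⟩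
    simp only [Nat.add_sub_cancel]
    rw [habs m]
    have := hs (m + 1)
    have := hpos (m + 1)
    nlinarith
  · have hlow : ∀ n, r * (r⁻¹) ^ n ≤ |cfQ lam A n| := by
      intro n
      have := (hgrow n).1
      rw [inv_pow, ← div_eq_mul_inv, div_le_iff₀ (pow_pos hr0 n)]
      exact this
    refine tendsto_atTop_mono hlow ?_
    exact (tendsto_pow_atTop_atTop_of_one_lt ((one_lt_inv₀ hr0).mpr hr1)).const_mul_atTop hr0
  · refine cauchySeq_of_le_geometric r (1 / r) hr1 ?_
    intro n
    have hd := cf_det lam A n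
    have h1 := hne n
    have h2 := hne (n + 1)
    have : cfP lam A n / cfQ lam A n - cfP lam A (n + 1) / cfQ lam A (n + 1)
        = 1 / (cfQ lam A n * cfQ lam A (n + 1)) := by
      field_simp
      linarith
    rw [Real.dist_eq, this, abs_div, abs_mul, abs_one]
    refine le_trans ?_ (hinv n)
    apply one_div_le_one_div_of_le (hpos n)
    have := hone (n + 1)
    have := hpos n
    nlinarith

/-! ### Unpacking regularity -/

theorem reg_ones {q : ℕ} {A : ℕ → ℤ} (hreg : RegularSeq q (fun i => A (i + 1)))
    {ε : ℤ} (hε : ε = 1 ∨ ε = -1) (l : ℕ) (h : ∀ j < hQ q + 1, A (l + 1 + j) = ε) : False := by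
  apply hreg l (hQ q + 1)
  refine ⟨ε, hε, Or.inl ?_⟩
  apply List.ext_getElem
  · simp
  · intro i h1 h2
    simp only [List.length_ofFn] at h1
    have := h i h1
    simp only [List.getElem_ofFn, List.getElem_replicate]
    rw [← this]; congr 1; omega

theorem reg_even {q : ℕ} {A : ℕ → ℤ} (hreg : RegularSeq q (fun i => A (i + 1))) (hq : Even q)
    {ε : ℤ} (hε : ε = 1 ∨ ε = -1) (l : ℕ) (h : ∀ j < hQ q, A (l + 1 + j) = ε)
    {m : ℤ} (hm : 1 ≤ m) (hA : A (l + hQ q + 1) = ε * m) : False := by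
  apply hreg l (hQ q + 1)
  refine ⟨ε, hε, Or.inr ?_⟩
  rw [if_pos hq]
  refine ⟨m, hm, ?_⟩
  apply List.ext_getElem
  · simp
  · intro i h1 h2
    simp only [List.length_ofFn] at h1
    simp only [List.getElem_ofFn]
    rcases Nat.lt_or_ge i (hQ q) with hi | hi
    · rw [List.getElem_append_left (by simpa using hi)]
      simp only [List.getElem_replicate]
      rw [← h i hi]; congr 1; omega
    · have : i = hQ q := by omega
      subst this
      simp [hA]

theorem reg_odd {q : ℕ} {A : ℕ → ℤ} (hreg : RegularSeq q (fun i => A (i + 1))) (hq : ¬ Even q)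
    {ε : ℤ} (hε : ε = 1 ∨ ε = -1) (l : ℕ) (h : ∀ j < hQ q, A (l + 1 + j) = ε)
    (h2 : A (l + hQ q + 1) = ε * 2) (h' : ∀ j < hQ q, A (l + hQ q + 1 + 1 + j) = ε)
    {m : ℤ} (hm : 1 ≤ m) (hA : A (l + hQ q + 1 + hQ q + 1) = ε * m) : False := by
  apply hreg l (hQ q + (hQ q + 2))
  refine ⟨ε, hε, Or.inr ?_⟩
  rw [if_neg hq]
  refine ⟨m, hm, ?_⟩
  generalize hQ q = H at *
  apply List.ext_getElem
  · simp; omega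
  · intro i h1 h2'
    simp only [List.length_ofFn] at h1
    simp only [List.getElem_ofFn]
    rcases Nat.lt_or_ge i H with hi | hi
    · rw [List.getElem_append_left (by simpa using hi)]
      simp only [List.getElem_replicate]
      rw [← h i hi]; congr 1; omega
    · obtain ⟨j, rfl⟩ := Nat.exists_eq_add_of_le hi
      rw [List.getElem_append_right (by simp)]
      simp only [List.length_replicate, Nat.add_sub_cancel_left]
      rcases j with _ | j
      · simp only [List.getElem_cons_zero]
        rw [← h2]; rfl
      · simp only [List.getElem_cons_succ]
        rcases Nat.lt_or_ge j H with hj | hj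
        · rw [List.getElem_append_left (by simpa using hj)]
          simp only [List.getElem_replicate]
          rw [← h' j hj]; congr 1; omega
        · have : j = H := by omega
          subst this
          rw [List.getElem_append_right (by simp)]
          simp only [List.length_replicate, Nat.sub_self, List.getElem_cons_zero]
          rw [← hA]; congr 1; omega

/-! ### Digit steps -/

/-- Every nonzero digit is `ε m` or `-ε m` with `m ≥ 1`. -/
theorem digit_cases {ε a : ℤ} (hε : ε = 1 ∨ ε = -1) (ha : a ≠ 0) :
    (∃ m : ℤ, 1 ≤ m ∧ a = ε * m) ∨ (∃ m : ℤ, 1 ≤ m ∧ a = (-ε) * m) := by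
  rcases lt_or_gt_of_ne ha with h | h <;> rcases hε with rfl | rfl
  · right; exact ⟨-a, by omega, by ring⟩
  · left; exact ⟨-a, by omega, by ring⟩
  · left; exact ⟨a, by omega, by ring⟩
  · right; exact ⟨a, by omega, by ring⟩

theorem eps_sq {ε : ℤ} (hε : ε = 1 ∨ ε = -1) : (ε : ℝ) * ε = 1 := by
  rcases hε with rfl | rfl <;> norm_num

theorem step_same {ε m : ℤ} (hε : ε = 1 ∨ ε = -1) (lam t : ℝ) :
    (ε : ℝ) * (1 / (((ε * m : ℤ) : ℝ) * lam - t)) = 1 / ((m : ℝ) * lam - ε * t) := by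
  rcases hε with rfl | rfl
  · simp
  · push_cast
    rw [show (-1 : ℝ) * m * lam - t = -((m : ℝ) * lam - (-1) * t) by ring, one_div, one_div, inv_neg]
    ring

theorem step_opp {ε m : ℤ} (hε : ε = 1 ∨ ε = -1) (lam t : ℝ) :
    ((-ε : ℤ) : ℝ) * (1 / ((((-ε) * m : ℤ) : ℝ) * lam - t)) = 1 / ((m : ℝ) * lam + ε * t) := by
  rw [step_same (ε := -ε) (by omega)]
  push_cast
  congr 1; ring

theorem abs_eps {ε : ℤ} (hε : ε = 1 ∨ ε = -1) {t : ℝ} (h : 0 ≤ (ε : ℝ) * t) :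
    |t| = (ε : ℝ) * t := by
  rcases hε with rfl | rfl
  · simp at *; exact h
  · simp at *; exact h

/-! ### Even case -/

/-- The invariant for even `q`. -/
def InvE (h : ℕ) (X : ℕ → ℝ) (A : ℕ → ℤ) (n : ℕ) (t : ℝ) : Prop :=
  ∃ ε : ℤ, (ε = 1 ∨ ε = -1) ∧ ∃ k l, k ≤ h ∧ n = l + k ∧ (∀ j < k, A (l + 1 + j) = ε) ∧
    0 ≤ (ε : ℝ) * t ∧ (ε : ℝ) * t ≤ X k

theorem one_div_bounds {x y : ℝ} (hy : 0 < y) (h : y ≤ x) : 0 ≤ 1 / x ∧ 1 / x ≤ 1 / y :=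
  ⟨by have := hy.trans_le h; positivity, one_div_le_one_div_of_le hy h⟩

theorem stepE {q : ℕ} {A : ℕ → ℤ} (hreg : RegularSeq q (fun i => A (i + 1))) (hq : Even q)
    (hnz : ∀ i, A (i + 1) ≠ 0) (lam : ℝ) (X : ℕ → ℝ) (hlam : 1 < lam)
    (hh : 1 ≤ hQ q)
    (hX0 : X 0 = 1 / (lam + 1)) (hX1 : ∀ k ≤ hQ q, X k ≤ 1)
    (hXs : ∀ k < hQ q, X k ≤ lam - 1 ∧ X (k + 1) = 1 / (lam - X k)) (n : ℕ) (t : ℝ)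
    (hinv : InvE (hQ q) X A n t) :
    InvE (hQ q) X A (n + 1) (1 / ((A (n + 1) : ℝ) * lam - t)) ∧ |t| ≤ 1 ∧
    (|t| ≤ max (lam - 1) (1 / lam) ∨
      |1 / ((A (n + 1) : ℝ) * lam - t)| ≤ max (lam - 1) (1 / lam)) := by
  obtain ⟨ε, hε, k, l, hk, rfl, hrun, h0, hle⟩ := hinv
  have ht1 : |t| ≤ 1 := by rw [abs_eps hε h0]; exact hle.trans (hX1 k hk)
  rcases digit_cases hε (hnz (l + k)) with ⟨m, hm, hA⟩ | ⟨m, hm, hA⟩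
  · -- same sign
    have hk' : k < hQ q := by
      rcases Nat.lt_or_ge k (hQ q) with h | h
      · exact h
      · have : k = hQ q := by omega
        subst this
        exact (reg_even hreg hq hε l hrun hm hA).elim
    obtain ⟨hb, hs⟩ := hXs k hk'
    refine ⟨?_, ht1, Or.inl ?_⟩
    · rw [hA]
      rcases eq_or_lt_of_le hm with rfl | hm2
      · refine ⟨ε, hε, k + 1, l, hk', rfl, ?_, ?_⟩
        · intro j hj
          rcases Nat.lt_or_ge j k with h | h
          · exact hrun j h
          · have : j = k := by omega
            subst this
            rw [show l + 1 + j = l + j + 1 by omega, hA]; ring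
        · rw [step_same hε, hs]
          apply one_div_bounds
          · linarith
          · push_cast; linarith
      · refine ⟨ε, hε, 0, l + k + 1, by omega, rfl, by simp, ?_⟩
        rw [step_same hε, hX0]
        have : (2 : ℝ) ≤ m := by exact_mod_cast hm2
        apply one_div_bounds
        · linarith
        · nlinarith
    · rw [abs_eps hε h0]
      exact le_max_of_le_left (hle.trans hb)
  · have hε' : -ε = 1 ∨ -ε = -1 := by omega
    have hm1 : (1 : ℝ) ≤ m := by exact_mod_cast hm
    have hbd : 0 ≤ ((-ε : ℤ) : ℝ) * (1 / ((A (l + k + 1) : ℝ) * lam - t)) ∧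
        ((-ε : ℤ) : ℝ) * (1 / ((A (l + k + 1) : ℝ) * lam - t)) ≤ 1 / lam := by
      rw [hA, step_opp hε]
      apply one_div_bounds
      · linarith
      · nlinarith
    refine ⟨?_, ht1, Or.inr ?_⟩
    · rcases eq_or_lt_of_le hm with rfl | hm2
      · refine ⟨-ε, hε', 1, l + k, hh, rfl, ?_, hbd.1, hbd.2.trans ?_⟩
        · intro j hj
          have : j = 0 := by omega
          subst this
          rw [add_zero, hA]; ring
        · obtain ⟨hb, hs⟩ := hXs 0 hh
          rw [hs]
          apply one_div_le_one_div_of_le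
          · linarith
          · have : 0 ≤ X 0 := by rw [hX0]; positivity
            linarith
      · refine ⟨-ε, hε', 0, l + k + 1, by omega, rfl, by simp, ?_⟩
        rw [hA, step_opp hε, hX0]
        have : (2 : ℝ) ≤ m := by exact_mod_cast hm2
        apply one_div_bounds
        · linarith
        · nlinarith
    · rw [abs_eps hε' hbd.1]
      exact le_max_of_le_right hbd.2

/-! ### Odd case -/

/-- The invariant for odd `q`. -/
def InvO (h : ℕ) (X Y : ℕ → ℝ) (A : ℕ → ℤ) (n : ℕ) (t : ℝ) : Prop :=
  ∃ ε : ℤ, (ε = 1 ∨ ε = -1) ∧ ∃ k l, k ≤ h ∧ n = l + k ∧ (∀ j < k, A (l + 1 + j) = ε) ∧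
    0 ≤ (ε : ℝ) * t ∧ ((ε : ℝ) * t ≤ X k ∨
      ((ε : ℝ) * t ≤ Y k ∧ ∃ l', l = l' + h + 1 ∧ (∀ j < h, A (l' + 1 + j) = ε) ∧
        A (l' + h + 1) = ε * 2))

theorem stepO {q : ℕ} {A : ℕ → ℤ} (hreg : RegularSeq q (fun i => A (i + 1))) (hq : ¬ Even q)
    (hnz : ∀ i, A (i + 1) ≠ 0) (lam R : ℝ) (X Y : ℕ → ℝ) (hlam : 1 ≤ lam) (hR0 : 0 < R)
    (hR1 : R < 1) (hlamR : 1 ≤ hQ q → 1 / R ≤ lam)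
    (hX0 : X 0 = 1 / (lam + 1 / R)) (hXR : ∀ k ≤ hQ q, X k ≤ R) (hYR : ∀ k ≤ hQ q, Y k ≤ R)
    (hXs : ∀ k < hQ q, 1 / R ≤ lam - X k ∧ X (k + 1) = 1 / (lam - X k))
    (hYs : ∀ k < hQ q, 1 / R ≤ lam - Y k ∧ Y (k + 1) = 1 / (lam - Y k))
    (hY0 : Y 0 = 1 / (2 * lam - X (hQ q))) (hXh : 1 / R ≤ 2 * lam - X (hQ q))
    (hXh0 : 0 ≤ X (hQ q)) (n : ℕ) (t : ℝ)
    (hinv : InvO (hQ q) X Y A n t) :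
    InvO (hQ q) X Y A (n + 1) (1 / ((A (n + 1) : ℝ) * lam - t)) ∧ |t| ≤ R := by
  obtain ⟨ε, hε, k, l, hk, rfl, hrun, h0, hle⟩ := hinv
  have hRR : 0 < 1 / R := by positivity
  have ht1 : |t| ≤ R := by
    rw [abs_eps hε h0]
    rcases hle with hle | ⟨hle, -⟩
    · exact hle.trans (hXR k hk)
    · exact hle.trans (hYR k hk)
  refine ⟨?_, ht1⟩
  have hε' : -ε = 1 ∨ -ε = -1 := by omega
  rcases digit_cases hε (hnz (l + k)) with ⟨m, hm, hA⟩ | ⟨m, hm, hA⟩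
  · rcases eq_or_lt_of_le hm with rfl | hm2
    · -- digit one, same sign
      have hrun' : ∀ j < k + 1, A (l + 1 + j) = ε := by
        intro j hj
        rcases Nat.lt_or_ge j k with h | h
        · exact hrun j h
        · have : j = k := by omega
          subst this
          rw [show l + 1 + j = l + j + 1 by omega, hA]; ring
      have hk' : k < hQ q := by
        rcases Nat.lt_or_ge k (hQ q) with h | h
        · exact h
        · have : k = hQ q := by omega
          subst this
          exact (reg_ones hreg hε l hrun').elim
      rw [hA]
      refine ⟨ε, hε, k + 1, l, hk', rfl, hrun', ?_⟩
      rw [step_same hε]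
      rcases hle with hle | ⟨hle, hl'⟩
      · obtain ⟨hb, hs⟩ := hXs k hk'
        rw [hs]
        have := one_div_bounds (x := ((1 : ℤ) : ℝ) * lam - ε * t) (y := lam - X k)
          (by linarith) (by push_cast; linarith)
        exact ⟨this.1, Or.inl this.2⟩
      · obtain ⟨hb, hs⟩ := hYs k hk'
        rw [hs]
        have := one_div_bounds (x := ((1 : ℤ) : ℝ) * lam - ε * t) (y := lam - Y k)
          (by linarith) (by push_cast; linarith)
        exact ⟨this.1, Or.inr ⟨this.2, hl'⟩⟩
    · have hm2' : (2 : ℝ) ≤ m := by exact_mod_cast hm2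
      rcases Nat.lt_or_ge k (hQ q) with hk' | hk'
      · have hb : 1 / R ≤ lam - ε * t := by
          rcases hle with hle | ⟨hle, hl'⟩
          · linarith [(hXs k hk').1]
          · linarith [(hYs k hk').1]
        rw [hA]
        refine ⟨ε, hε, 0, l + k + 1, by omega, rfl, by simp, ?_⟩
        rw [step_same hε, hX0]
        have := one_div_bounds (x := (m : ℝ) * lam - ε * t) (y := lam + 1 / R)
          (by linarith) (by nlinarith)
        exact ⟨this.1, Or.inl this.2⟩
      · have : k = hQ q := by omega
        subst this
        have hle : (ε : ℝ) * t ≤ X (hQ q) := by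
          rcases hle with hle | ⟨hle, l', rfl, hr, h2⟩
          · exact hle
          · exact (reg_odd hreg hq hε l' hr h2 hrun hm hA).elim
        rcases eq_or_lt_of_le (Int.add_one_le_of_lt hm2) with hm3 | hm3
        · have hm3 : m = 2 := by omega
          subst hm3
          refine ⟨ε, hε, 0, l + hQ q + 1, by omega, rfl, by simp, ?_⟩
          rw [hA, step_same hε, hY0]
          have := one_div_bounds (x := ((2 : ℤ) : ℝ) * lam - ε * t) (y := 2 * lam - X (hQ q))
            (by linarith) (by push_cast; linarith)
          exact ⟨this.1, Or.inr ⟨this.2, l, rfl, hrun, hA⟩⟩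
        · have hm3' : (3 : ℝ) ≤ m := by
            have : (3 : ℤ) ≤ m := by omega
            exact_mod_cast this
          rw [hA]
          refine ⟨ε, hε, 0, l + hQ q + 1, by omega, rfl, by simp, ?_⟩
          rw [step_same hε, hX0]
          have := one_div_bounds (x := (m : ℝ) * lam - ε * t) (y := lam + 1 / R)
            (by linarith) (by nlinarith)
          exact ⟨this.1, Or.inl this.2⟩
  · rcases eq_or_lt_of_le hm with rfl | hm2
    · have hrun' : ∀ j < 1, A (l + k + 1 + j) = -ε := by
        intro j hj
        have : j = 0 := by omega
        subst this
        rw [add_zero, hA]; ring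
      have hh : 1 ≤ hQ q := by
        by_contra hcon
        have hz : hQ q = 0 := by omega
        exact reg_ones hreg hε' (l + k) (by rw [hz]; exact hrun')
      rw [hA]
      refine ⟨-ε, hε', 1, l + k, hh, rfl, hrun', ?_⟩
      rw [step_opp hε]
      obtain ⟨hb, hs⟩ := hXs 0 hh
      rw [show (1 : ℕ) = 0 + 1 from rfl, hs]
      have hx : 0 ≤ X 0 := by rw [hX0]; positivity
      have := one_div_bounds (x := ((1 : ℤ) : ℝ) * lam + ε * t) (y := lam - X 0)
        (by linarith) (by push_cast; linarith)
      exact ⟨this.1, Or.inl this.2⟩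
    · have hm2' : (2 : ℝ) ≤ m := by exact_mod_cast hm2
      by_cases hh : 1 ≤ hQ q
      · rw [hA]
        refine ⟨-ε, hε', 0, l + k + 1, by omega, rfl, by simp, ?_⟩
        rw [step_opp hε, hX0]
        have := one_div_bounds (x := (m : ℝ) * lam + ε * t) (y := lam + 1 / R)
          (by linarith) (by nlinarith [hlamR hh])
        exact ⟨this.1, Or.inl this.2⟩
      · have hz : hQ q = 0 := by omega
        rcases eq_or_lt_of_le (Int.add_one_le_of_lt hm2) with hm3 | hm3
        · have hm3 : m = 2 := by omega
          subst hm3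
          refine ⟨-ε, hε', 0, l + k + 1, by omega, rfl, by simp, ?_⟩
          rw [hA, step_opp hε, hY0]
          have := one_div_bounds (x := ((2 : ℤ) : ℝ) * lam + ε * t) (y := 2 * lam - X (hQ q))
            (by linarith) (by push_cast; linarith)
          refine ⟨this.1, Or.inr ⟨this.2, l + k, by omega, ?_, ?_⟩⟩
          · intro j hj; omega
          · rw [hz, add_zero, hA]
        · have hm3' : (3 : ℝ) ≤ m := by
            have : (3 : ℤ) ≤ m := by omega
            exact_mod_cast this
          rw [hA]
          refine ⟨-ε, hε', 0, l + k + 1, by omega, rfl, by simp, ?_⟩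
          rw [step_opp hε, hX0]
          have := one_div_bounds (x := (m : ℝ) * lam + ε * t) (y := lam + 1 / R)
            (by linarith) (by nlinarith)
          exact ⟨this.1, Or.inl this.2⟩

/-! ### Trigonometric input -/

/-- `s_k = sin (kπ/q)`. -/
noncomputable def sS (q k : ℕ) : ℝ := Real.sin (k * (Real.pi / q))

theorem sS_rec (q k : ℕ) : sS q (k + 2) = lamq q * sS q (k + 1) - sS q k := by
  unfold sS lamq
  set θ := Real.pi / q
  have e1 : ((k + 2 : ℕ) : ℝ) * θ = ((k + 1 : ℕ) : ℝ) * θ + θ := by push_cast; ring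
  have e2 : (k : ℝ) * θ = ((k + 1 : ℕ) : ℝ) * θ - θ := by push_cast; ring
  rw [e1, e2, Real.sin_add, Real.sin_sub]
  ring

theorem sS_zero (q : ℕ) : sS q 0 = 0 := by simp [sS]

theorem sS_pos {q k : ℕ} (h0 : 0 < k) (h : k < q) : 0 < sS q k := by
  unfold sS
  have hq : (0 : ℝ) < q := by exact_mod_cast h0.trans h
  have hk : (0 : ℝ) < k := by exact_mod_cast h0
  have hkq : (k : ℝ) < q := by exact_mod_cast h
  apply Real.sin_pos_of_pos_of_lt_pi
  · have := Real.pi_pos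
    positivity
  · rw [mul_div_assoc', div_lt_iff₀ hq]
    nlinarith [Real.pi_pos]

theorem sS_symm {q j k : ℕ} (hq : 0 < q) (h : j + k = q) : sS q j = sS q k := by
  unfold sS
  have hq' : (0 : ℝ) < q := by exact_mod_cast hq
  have : (j : ℝ) * (Real.pi / q) = Real.pi - k * (Real.pi / q) := by
    have : (j : ℝ) = q - k := by rw [← h]; push_cast; ring
    rw [this]; field_simp
  rw [this, Real.sin_pi_sub]

theorem sS_nonneg {q k : ℕ} (hq : 0 < q) (h : k ≤ q) : 0 ≤ sS q k := by
  rcases Nat.eq_zero_or_pos k with rfl | h0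
  · rw [sS_zero]
  · rcases eq_or_lt_of_le h with rfl | h1
    · rw [sS_symm hq (Nat.add_zero k), sS_zero]
    · exact (sS_pos h0 h1).le

theorem lamq_lt_two {q : ℕ} (hq : 3 ≤ q) : lamq q < 2 := by
  unfold lamq
  have hq' : (3 : ℝ) ≤ q := by exact_mod_cast hq
  have : Real.cos (Real.pi / q) < Real.cos 0 := by
    apply Real.cos_lt_cos_of_nonneg_of_le_pi le_rfl
    · apply div_le_self Real.pi_pos.le; linarith
    · have := Real.pi_pos; positivity
  rw [Real.cos_zero] at this
  linarith

theorem lamq_ge_one {q : ℕ} (hq : 3 ≤ q) : 1 ≤ lamq q := by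
  unfold lamq
  have hq' : (3 : ℝ) ≤ q := by exact_mod_cast hq
  have : Real.cos (Real.pi / 3) ≤ Real.cos (Real.pi / q) := by
    have := Real.pi_pos
    apply Real.cos_le_cos_of_nonneg_of_le_pi
    · positivity
    · linarith
    · gcongr
  rw [Real.cos_pi_div_three] at this
  linarith

theorem lamq_ge_four {q : ℕ} (hq : 4 ≤ q) : 1.4 ≤ lamq q := by
  unfold lamq
  have hq' : (4 : ℝ) ≤ q := by exact_mod_cast hq
  have : Real.cos (Real.pi / 4) ≤ Real.cos (Real.pi / q) := by
    have := Real.pi_pos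
    apply Real.cos_le_cos_of_nonneg_of_le_pi
    · positivity
    · linarith
    · gcongr
  rw [Real.cos_pi_div_four] at this
  have h2 : (1.4 : ℝ) ≤ Real.sqrt 2 := by
    apply Real.le_sqrt_of_sq_le; norm_num
  linarith

/-- `f(y) = 1/(λ-y) ≥ y`. -/
theorem f_ge {lam y : ℝ} (hlam : 0 ≤ lam) (h2 : lam < 2) (h : 0 < lam - y) :
    y ≤ 1 / (lam - y) := by
  rw [le_div_iff₀ h]
  nlinarith [sq_nonneg (y - lam / 2)]

/-- Ratios of a positive solution of the recurrence. -/
theorem ratio_facts {lam : ℝ} (hlam : 0 ≤ lam) (h2 : lam < 2) (V : ℕ → ℝ) (h : ℕ)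
    (hrec : ∀ k, V (k + 2) = lam * V (k + 1) - V k) (hpos : ∀ k ≤ h + 1, 0 < V k) :
    (∀ k < h, 0 < lam - V k / V (k + 1) ∧
      V (k + 1) / V (k + 2) = 1 / (lam - V k / V (k + 1))) ∧
    (∀ k ≤ h, V k / V (k + 1) ≤ V h / V (h + 1)) := by
  have A1 : ∀ k < h, 0 < lam - V k / V (k + 1) ∧
      V (k + 1) / V (k + 2) = 1 / (lam - V k / V (k + 1)) := by
    intro k hk
    have p1 := hpos (k + 1) (by omega)
    have p2 := hpos (k + 2) (by omega)
    have e : lam - V k / V (k + 1) = V (k + 2) / V (k + 1) := by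
      rw [hrec k]; field_simp
    rw [e]
    refine ⟨by positivity, ?_⟩
    rw [one_div_div]
  refine ⟨A1, ?_⟩
  intro k hk
  induction h, hk using Nat.le_induction with
  | base => exact le_rfl
  | succ n hn ih =>
    have := ih (fun k hk => hpos k (by omega)) (fun k hk => A1 k (by omega))
    obtain ⟨b1, b2⟩ := A1 n (by omega)
    refine this.trans ?_
    rw [b2]
    exact f_ge hlam h2 b1

theorem even_main (q : ℕ) (hq : 3 ≤ q) (hqe : Even q) (A : ℕ → ℤ)
    (hnz : ∀ i, A (i + 1) ≠ 0) (hreg : RegularSeq q (fun i => A (i + 1))) :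
    (∀ n, |ratT (lamq q) A n| ≤ 1) ∧
    (∀ n, |ratT (lamq q) A n| ≤ max (lamq q - 1) (1 / lamq q) ∨
      |ratT (lamq q) A (n + 1)| ≤ max (lamq q - 1) (1 / lamq q)) := by
  have hqh : q = 2 * hQ q + 2 := by
    unfold hQ; rw [if_pos hqe]; obtain ⟨r, hr⟩ := hqe; omega
  have hh : 1 ≤ hQ q := by omega
  have hl4 := lamq_ge_four (q := q) (by obtain ⟨r, hr⟩ := hqe; omega)
  have hl2 := lamq_lt_two hq
  set h := hQ q with hdef
  set lam := lamq q with hlamdef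
  have hl : 1 < lam := by norm_num at hl4; linarith
  let V : ℕ → ℝ := fun k => sS q k + sS q (k + 1)
  have hVrec : ∀ k, V (k + 2) = lam * V (k + 1) - V k := by
    intro k
    have e1 := sS_rec q k
    have e2 := sS_rec q (k + 1)
    simp only [V]
    rw [e1, show k + 2 + 1 = k + 1 + 2 by ring, e2]
    rw [e1]; ring
  have hVpos : ∀ k ≤ h + 1, 0 < V k := by
    intro k hk
    have := sS_nonneg (q := q) (k := k) (by omega) (by omega)
    have := sS_pos (q := q) (k := k + 1) (by omega) (by omega)
    simp only [V]; linarith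
  obtain ⟨F1, F2⟩ := ratio_facts (by linarith) hl2 V h hVrec hVpos
  have hVh : V h / V (h + 1) = 1 := by
    rw [div_eq_one_iff_eq (hVpos (h + 1) le_rfl).ne']
    simp only [V]
    rw [sS_symm (q := q) (j := h) (k := h + 2) (by omega) (by omega)]
    ring
  let X : ℕ → ℝ := fun k => V k / V (k + 1)
  have hX1 : ∀ k ≤ h, X k ≤ 1 := fun k hk => by rw [← hVh]; exact F2 k hk
  have hX0 : X 0 = 1 / (lam + 1) := by
    have e := sS_rec q 0
    have p := sS_pos (q := q) (k := 1) (by omega) (by omega)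
    simp only [X, V]
    simp only [zero_add, sS_zero, sub_zero] at e ⊢
    rw [show 1 + 1 = 2 from rfl, e, ← hlamdef]
    field_simp
    ring
  have hXs : ∀ k < h, X k ≤ lam - 1 ∧ X (k + 1) = 1 / (lam - X k) := by
    intro k hk
    obtain ⟨b1, b2⟩ := F1 k hk
    refine ⟨?_, b2⟩
    have h1 := hX1 (k + 1) hk
    have b2' : X (k + 1) = 1 / (lam - X k) := b2
    rw [b2', div_le_one b1] at h1
    linarith
  have hstep := stepE hreg hqe hnz lam X hl hh hX0 hX1 hXs
  have hinv : ∀ n, InvE h X A n (ratT lam A n) := by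
    intro n
    induction n with
    | zero =>
      refine ⟨1, Or.inl rfl, 0, 0, by omega, rfl, by simp, by simp [ratT], ?_⟩
      simp only [ratT, mul_zero, hX0]
      positivity
    | succ n ih => exact (hstep n _ ih).1
  exact ⟨fun n => (hstep n _ (hinv n)).2.1, fun n => (hstep n _ (hinv n)).2.2⟩

theorem odd_main (q : ℕ) (hq : 3 ≤ q) (hqe : ¬ Even q) (A : ℕ → ℤ)
    (hnz : ∀ i, A (i + 1) ≠ 0) (hreg : RegularSeq q (fun i => A (i + 1))) :
    ∃ R : ℝ, 0 < R ∧ R < 1 ∧ ∀ n, |ratT (lamq q) A n| ≤ R := by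
  have hqh : q = 2 * hQ q + 3 := by
    unfold hQ; rw [if_neg hqe]; rw [Nat.not_even_iff_odd] at hqe; obtain ⟨r, hr⟩ := hqe; omega
  have hl1 := lamq_ge_one hq
  have hl2 := lamq_lt_two hq
  have hl4 : 1 ≤ hQ q → 1.4 ≤ lamq q := fun h => lamq_ge_four (by omega)
  set h := hQ q with hdef
  set lam := lamq q with hlamdef
  obtain ⟨R, hR0, hReq⟩ : ∃ R : ℝ, 0 < R ∧ R ^ 2 + (2 - lam) * R = 1 := by
    have hs : Real.sqrt ((2 - lam) ^ 2 + 4) ^ 2 = (2 - lam) ^ 2 + 4 := Real.sq_sqrt (by positivity)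
    have hs0 := Real.sqrt_nonneg ((2 - lam) ^ 2 + 4)
    refine ⟨(lam - 2 + Real.sqrt ((2 - lam) ^ 2 + 4)) / 2, ?_, ?_⟩
    · nlinarith
    · linear_combination hs / 4
  have hR1 : R < 1 := by nlinarith
  refine ⟨R, hR0, hR1, ?_⟩
  -- the sine values
  have ps : 0 < sS q (h + 1) := sS_pos (by omega) (by omega)
  have p1 : 0 < sS q 1 := sS_pos (by omega) (by omega)
  have es2 : sS q (h + 2) = sS q (h + 1) := sS_symm (by omega) (by omega)
  have es0 : sS q h = (lam - 1) * sS q (h + 1) := by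
    have := sS_rec q h
    rw [es2] at this
    linarith
  have ee : sS q 2 = lam * sS q 1 := by
    have := sS_rec q 0
    simp only [zero_add, sS_zero, sub_zero] at this
    exact this
  have hdisc : ∀ k, sS q (k + 1) ^ 2 - sS q k * sS q (k + 2) = sS q 1 ^ 2 := by
    intro k
    induction k with
    | zero => simp [sS_zero]
    | succ k ih =>
      have e1 := sS_rec q k
      have e2 := sS_rec q (k + 1)
      rw [show k + 1 + 2 = k + 3 by ring, show k + 1 + 1 = k + 2 by ring] at *
      rw [e2, ← ih]
      linear_combination (sS q (k + 2)) * e1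
  have hd1 : sS q 1 ^ 2 = (2 - lam) * sS q (h + 1) ^ 2 := by
    rw [← hdisc h, es2, es0]; ring
  let V : ℕ → ℝ := fun k => sS q k + R * sS q (k + 1)
  have hVrec : ∀ k, V (k + 2) = lam * V (k + 1) - V k := by
    intro k
    have e1 := sS_rec q k
    have e2 := sS_rec q (k + 1)
    simp only [V]
    rw [show k + 2 + 1 = k + 1 + 2 by ring, e2, e1]; ring
  have hVpos : ∀ k ≤ 2 * h + 2, 0 < V k := by
    intro k hk
    simp only [V]
    rcases Nat.eq_zero_or_pos k with rfl | hk0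
    · rw [sS_zero]; simp only [zero_add]; positivity
    · have a1 := sS_nonneg (q := q) (k := k + 1) (by omega) (by omega)
      have a2 := sS_pos (q := q) (k := k) (by omega) (by omega)
      have := mul_nonneg hR0.le a1
      linarith
  have hVpos' : ∀ k ≤ h + 1, 0 < V k := fun k hk => hVpos k (by omega)
  obtain ⟨F1, F2⟩ := ratio_facts (by linarith) hl2 V h hVrec hVpos'
  let X : ℕ → ℝ := fun k => V k / V (k + 1)
  have hXh : X h ≤ R := by
    simp only [X]
    rw [div_le_iff₀ (hVpos' (h + 1) le_rfl)]
    simp only [V]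
    rw [es2, es0]
    have : lam - 1 ≤ R ^ 2 := by nlinarith
    nlinarith
  have hXR : ∀ k ≤ h, X k ≤ R := fun k hk => (F2 k hk).trans hXh
  have hX0 : X 0 = 1 / (lam + 1 / R) := by
    simp only [X, V]
    simp only [zero_add, sS_zero]
    rw [show 1 + 1 = 2 from rfl, ee]
    field_simp
    ring
  have hXs : ∀ k < h, 1 / R ≤ lam - X k ∧ X (k + 1) = 1 / (lam - X k) := by
    intro k hk
    obtain ⟨b1, b2⟩ := F1 k hk
    refine ⟨?_, b2⟩
    have h1 := hXR (k + 1) hk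
    have b2' : X (k + 1) = 1 / (lam - X k) := b2
    rw [b2'] at h1
    exact (one_div_le b1 hR0).mp h1
  let W : ℕ → ℝ := fun k => V (h + 1 + k) + lam * V (h + 1) / sS q 1 * sS q k
  have hWrec : ∀ k, W (k + 2) = lam * W (k + 1) - W k := by
    intro k
    have e1 := sS_rec q k
    have e2 := hVrec (h + 1 + k)
    simp only [W]
    rw [show h + 1 + (k + 2) = h + 1 + k + 2 by ring, e1, e2,
      show h + 1 + (k + 1) = h + 1 + k + 1 by ring]
    ring
  have hWpos : ∀ k ≤ h + 1, 0 < W k := by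
    intro k hk
    have a1 := hVpos (h + 1 + k) (by omega)
    have a2 := hVpos (h + 1) (by omega)
    have a3 := sS_nonneg (q := q) (k := k) (by omega) (by omega)
    have a4 : 0 ≤ lam * V (h + 1) / sS q 1 * sS q k := by positivity
    simp only [W]; linarith
  obtain ⟨G1, G2⟩ := ratio_facts (by linarith) hl2 W h hWrec hWpos
  let Y : ℕ → ℝ := fun k => W k / W (k + 1)
  have hYh : Y h = R := by
    simp only [Y]
    rw [div_eq_iff (hWpos (h + 1) le_rfl).ne']
    simp only [W, V]
    have i1 : sS q (h + 1 + h) = lam * sS q 1 := by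
      rw [← ee]; exact sS_symm (by omega) (by omega)
    have i2 : sS q (h + 1 + h + 1) = sS q 1 := sS_symm (by omega) (by omega)
    have i3 : sS q (h + 1 + (h + 1)) = sS q 1 := sS_symm (by omega) (by omega)
    have i4 : sS q (h + 1 + (h + 1) + 1) = 0 := by
      rw [← sS_zero q]; exact sS_symm (by omega) (by omega)
    rw [i1, i2, i3, i4, show h + 1 + 1 = h + 2 by ring, es2, es0]
    field_simp
    have hkey : sS q 1 ^ 2 = (1 + R) * (R + 1 - lam) * sS q (h + 1) ^ 2 := by
      rw [hd1]; linear_combination (-(sS q (h + 1)) ^ 2) * hReq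
    linear_combination lam * hkey
  have hYR : ∀ k ≤ h, Y k ≤ R := fun k hk => by rw [← hYh]; exact G2 k hk
  have hYs : ∀ k < h, 1 / R ≤ lam - Y k ∧ Y (k + 1) = 1 / (lam - Y k) := by
    intro k hk
    obtain ⟨b1, b2⟩ := G1 k hk
    refine ⟨?_, b2⟩
    have h1 := hYR (k + 1) hk
    have b2' : Y (k + 1) = 1 / (lam - Y k) := b2
    rw [b2'] at h1
    exact (one_div_le b1 hR0).mp h1
  have hWW : 2 * lam - X h = W 1 / W 0 := by
    have hv := hVpos' (h + 1) le_rfl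
    have e := hVrec h
    simp only [W, X]
    rw [sS_zero, mul_zero, add_zero, add_zero, show h + 1 + 1 = h + 2 by ring, e]
    field_simp
    ring
  have hY0 : Y 0 = 1 / (2 * lam - X h) := by
    rw [hWW, one_div_div]
  have hXh' : 1 / R ≤ 2 * lam - X h := by
    have h1 := hYR 0 (by omega)
    have hp : 0 < 2 * lam - X h := by linarith
    rw [hY0] at h1
    exact (one_div_le hp hR0).mp h1
  have hXh0 : 0 ≤ X h := (div_pos (hVpos' h (by omega)) (hVpos' (h + 1) le_rfl)).le
  have hlamR : 1 ≤ h → 1 / R ≤ lam := by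
    intro hh
    have h4 := hl4 hh
    norm_num at h4
    rw [div_le_iff₀ hR0]
    by_contra hcon
    push Not at hcon
    nlinarith [mul_pos hR0 hR0]
  have hstep := stepO hreg hqe hnz lam R X Y hl1 hR0 hR1 hlamR hX0 hXR hYR hXs hYs hY0 hXh' hXh0
  have hinv : ∀ n, InvO h X Y A n (ratT lam A n) := by
    intro n
    induction n with
    | zero =>
      refine ⟨1, Or.inl rfl, 0, 0, by omega, rfl, by simp, by simp [ratT], Or.inl ?_⟩
      simp only [ratT, mul_zero, hX0]
      positivity
    | succ n ih => exact (hstep n _ ih).1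
  exact fun n => (hstep n _ (hinv n)).2

/-- Properties of the convergents of an infinite regular `λ_q`-CF: `q_n ≠ 0`,
`|q_n| ≥ |q_{n-1}|` (strictly for `q = 3`), `|q_n| → ∞`, and `(p_n/q_n)` is Cauchy. -/
theorem stmt18 (q : ℕ) (hq : 3 ≤ q) (A : ℕ → ℤ)
    (hnz : ∀ i, A (i + 1) ≠ 0) (hreg : RegularSeq q (fun i => A (i + 1))) :
    (∀ n, cfQ (lamq q) A n ≠ 0) ∧
    (∀ n : ℕ, 1 ≤ n → |cfQ (lamq q) A (n - 1)| ≤ |cfQ (lamq q) A n|) ∧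
    (q = 3 → ∀ n : ℕ, 1 ≤ n → |cfQ (lamq q) A (n - 1)| < |cfQ (lamq q) A n|) ∧
    Filter.Tendsto (fun n => |cfQ (lamq q) A n|) Filter.atTop Filter.atTop ∧
    CauchySeq (fun n => cfP (lamq q) A n / cfQ (lamq q) A n) := by
  have hl1 := lamq_ge_one hq
  have hl2 := lamq_lt_two hq
  by_cases hqe : Even q
  · obtain ⟨h1, hc⟩ := even_main q hq hqe A hnz hreg
    have hl4 := lamq_ge_four (q := q) (by obtain ⟨r, hr⟩ := hqe; omega)
    norm_num at hl4
    obtain ⟨c1, c2, -, c4, c5⟩ := final_core (lamq q) (max (lamq q - 1) (1 / lamq q)) A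
      (by linarith) (lt_max_of_lt_left (by linarith))
      (max_lt (by linarith) (by rw [div_lt_one (by linarith)]; linarith)) hnz
      (fun n => (h1 n).trans_lt (by linarith)) h1 hc
    refine ⟨c1, c2, ?_, c4, c5⟩
    rintro rfl
    exact absurd hqe (by decide)
  · obtain ⟨R, hR0, hR1, hR⟩ := odd_main q hq hqe A hnz hreg
    obtain ⟨c1, c2, c3, c4, c5⟩ := final_core (lamq q) R A (by linarith) hR0 hR1 hnz
      (fun n => (hR n).trans_lt (by linarith)) (fun n => (hR n).trans hR1.le)
      (fun n => Or.inl (hR n))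
    exact ⟨c1, c2, fun _ => c3 (fun n => (hR n).trans_lt hR1), c4, c5⟩
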